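/- There exist real zero polynomials Q₁ ∈ ℝ[x₁,x₂,x₃] and Q₂ ∈ ℝ[x₁,x₂,x₄] with Q₁|_{x₃=0} = Q₂|_{x₄=0} such that for every positive integer m there is no real zero polynomial Q ∈ ℝ[x₁,x₂,x₃,x₄] satisfying Q|_{x₄=0} = Q₁^m and Q|_{x₃=0} = Q₂^m. In particular, the following conjecture is false: whenever Q₁ ∈ ℝ[x₁,x₂,x₃] and Q₂ ∈ ℝ[x₁,x₂,x₄] are real zero polynomials with Q₁|_{x₃=0} = Q₂|_{x₄=0}, there exists a real zero polynomial Q ∈ ℝ[x₁,x₂,x₃,x₄] with Q|_{x₄=0} = Q₁ and Q|_{x₃=0} = Q₂. -/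

import Mathlib

/-!
The example is `Q₁ = (1 + x₁ + x₃)(1 - x₁) - x₂²(2 + x₃)` and
`Q₂ = (1 + x₁ + x₄)(1 - x₁) - 2x₂²`, which agree on the plane `x₃ = x₄ = 0`. Both are determinants
of symmetric linear matrix pencils in which `x₁` has the coefficient `diag(1, -1)`, up to a zero
eigenvalue, and `x₃` (respectively `x₄`) has as coefficient the projection onto the
`1`-eigenspace of the coefficient of `x₁`. An amalgam `Q` is thereby forced to treat `x₃` and `x₄`
as the same variable, although `Q₁` and `Q₂` differ.

For a real zero polynomial with `Q(0) = 1` write `Q(tv) = ∏ (1 + aᵢ t)` with real `aᵢ`. Then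
`tr v = ∑ aᵢ` is linear and `q(v) = ∑ aᵢ²` is a positive semidefinite quadratic form in `v`. Let
`Q` be an amalgam of the `m`-th powers, and put `w = e₃ + e₄ - e₁` and `u = e₃ - e₄`. The
`e₃e₄`-term of `q` is the only unknown one, and it cancels in `q(w) + q(u) = 2m`. Also `tr w = 2m`.
Since `Q(t e₃) = Q(t (e₄ - e₁)) = (1 + t)^m`, the polynomial `Q(tw)` has degree at most `2m`
(`natDegree_linePoly_add_le`), so Cauchy–Schwarz gives `q(w) ≥ 2m`, hence `q(u) = 0` and
`Q(tu) = 1`. It follows (`linePoly_add_of_eq_one`) that `Q` is invariant under translation by `u`,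
so `Q₁(0, 1, 1)^m = Q₂(0, 1, 1)^m`, that is `(-1)^m = 0`.

Both structural facts follow from `array_degree`: for a real zero polynomial `S(x, y)` the degree
in `x` equals the degree of `S(x, 0)`. To see this, differentiate `t ↦ S(t, ty)` as often as this
degree and apply the bound of the coefficients of `∏ (1 + aᵢ t)` by powers of `∑ aᵢ²` as `y → 0`.
-/

/-- `Q` is a real zero polynomial: for every `v ∈ ℝ^E` the univariate polynomial
`t ↦ Q (t • v)` has only real zeros. -/
def IsRealZero {σ : Type*} (Q : MvPolynomial σ ℝ) : Prop :=
  ∀ v : σ → ℝ, ∀ t : ℂ,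
    MvPolynomial.aeval (fun i => t * (v i : ℂ)) Q = 0 → t.im = 0

/-- The polynomial obtained from `Q` by setting the variable `x j` equal to `0`.
Here the variables `x₁, x₂, x₃, x₄` are indexed by `0, 1, 2, 3 : Fin 4`. -/
noncomputable def setVarZero (j : Fin 4) (Q : MvPolynomial (Fin 4) ℝ) :
    MvPolynomial (Fin 4) ℝ :=
  MvPolynomial.aeval (fun i => if i = j then 0 else MvPolynomial.X i) Q

section AmalgamationProof

open Polynomial Filter Topology

/-! ### Real-rooted univariate polynomials -/

/-- All complex zeros of the real polynomial `f` are real. In particular `f ≠ 0`. -/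
def RealRooted (f : ℝ[X]) : Prop := ∀ z : ℂ, aeval z f = 0 → z.im = 0

/-- By the Gauss–Lucas theorem, since the real line is a convex subset of `ℂ`. -/
theorem RealRooted.derivative {f : ℝ[X]} (hf : RealRooted f) (h : derivative f ≠ 0) :
    RealRooted (derivative f) := by
  intro z hz
  have hdeg : 0 < (f.map (algebraMap ℝ ℂ)).degree := by
    rw [Polynomial.degree_map]
    by_contra hc
    exact h (by rw [Polynomial.eq_C_of_degree_le_zero (not_lt.1 hc), derivative_C])
  have hmem : z ∈ (Polynomial.derivative (f.map (algebraMap ℝ ℂ))).rootSet ℂ := by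
    rw [derivative_map, mem_rootSet]
    refine ⟨(Polynomial.map_ne_zero_iff (algebraMap ℝ ℂ).injective).2 h, ?_⟩
    rw [aeval_map_algebraMap, hz]
  have hsub : (f.map (algebraMap ℝ ℂ)).rootSet ℂ ⊆ {w : ℂ | w.im = 0} := by
    intro w hw
    rw [mem_rootSet, aeval_map_algebraMap] at hw
    exact hf w hw.2
  have hconv : Convex ℝ {w : ℂ | w.im = 0} :=
    convex_hyperplane (f := Complex.im) ⟨Complex.add_im, fun c x => by simp⟩ 0
  exact convexHull_min hsub hconv (rootSet_derivative_subset_convexHull_rootSet hdeg hmem)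

/-- The numbers in `l` are the negative reciprocals of the zeros of `f`; for
`f(t) = det(1 + tA)` they are the nonzero eigenvalues of `A`. -/
theorem RealRooted.exists_list {f : ℝ[X]} (hf : RealRooted f) (h0 : f.coeff 0 = 1) :
    ∃ l : List ℝ, f = (l.map fun a => 1 + C a * X).prod ∧ l.length = f.natDegree := by
  induction hn : f.natDegree generalizing f with
  | zero =>
    refine ⟨[], ?_, rfl⟩
    rw [Polynomial.eq_C_of_natDegree_eq_zero hn, h0]; simp
  | succ n ih =>
    have hdeg : (f.map (algebraMap ℝ ℂ)).degree ≠ 0 := by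
      rw [Polynomial.degree_map]
      intro hc
      have := natDegree_eq_zero_iff_degree_le_zero.2 hc.le
      omega
    obtain ⟨z, hz⟩ := IsAlgClosed.exists_root _ hdeg
    have hz' : aeval z f = 0 := by
      rw [IsRoot.def, eval_map_algebraMap] at hz; exact hz
    obtain ⟨r, rfl⟩ : ∃ r : ℝ, z = r := ⟨z.re, Complex.ext rfl (by simpa using hf z hz')⟩
    have hr : f.IsRoot r := by
      have : aeval (algebraMap ℝ ℂ r) f = 0 := hz'
      rw [aeval_algebraMap_apply] at this
      simpa using this
    have hr0 : r ≠ 0 := by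
      rintro rfl
      rw [IsRoot.def, ← coeff_zero_eq_eval_zero, h0] at hr
      exact one_ne_zero hr
    obtain ⟨g, hg⟩ := dvd_iff_isRoot.2 hr
    have hfac : f = (1 + C (-r⁻¹) * X) * (C (-r) * g) := by
      rw [hg]
      have : (C r⁻¹ * C r : ℝ[X]) = 1 := by rw [← C_mul, inv_mul_cancel₀ hr0, C_1]
      simp only [C_neg]
      linear_combination -X * g * this
    have hk0 : (C (-r) * g).coeff 0 = 1 := by
      have := congrArg (fun p => coeff p 0) hfac
      simp only [mul_coeff_zero, coeff_add, coeff_one_zero, coeff_X_zero, h0] at this ⊢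
      linarith
    have hkne : C (-r) * g ≠ 0 := fun h => by rw [h] at hk0; simp at hk0
    have hd1 : (1 + C (-r⁻¹) * X : ℝ[X]).natDegree = 1 := by
      have : (1 + C (-r⁻¹) * X : ℝ[X]) = C (-r⁻¹) * X + C 1 := by simp [add_comm]
      rw [this, natDegree_linear (neg_ne_zero.2 (inv_ne_zero hr0))]
    have hkd : (C (-r) * g).natDegree = n := by
      have h1 : (1 + C (-r⁻¹) * X : ℝ[X]) ≠ 0 := fun h => by rw [h] at hd1; simp at hd1
      have := natDegree_mul h1 hkne
      rw [← hfac, hd1, hn] at this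
      omega
    obtain ⟨l, hl, hlen⟩ := ih (f := C (-r) * g)
      (fun w hw => hf w (by rw [hfac, map_mul, hw, mul_zero])) hk0 hkd
    exact ⟨-r⁻¹ :: l, by rw [List.map_cons, List.prod_cons, ← hl]; exact hfac, by simp [hlen]⟩

theorem prod_coeff_facts (l : List ℝ) :
    ((l.map fun a => 1 + C a * X).prod : ℝ[X]).coeff 0 = 1 ∧
    ((l.map fun a => 1 + C a * X).prod : ℝ[X]).coeff 1 = l.sum ∧
    ((l.map fun a => 1 + C a * X).prod : ℝ[X]).coeff 1 ^ 2
      - 2 * ((l.map fun a => 1 + C a * X).prod : ℝ[X]).coeff 2 = (l.map (· ^ 2)).sum := by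
  induction l with
  | nil => simp [coeff_one]
  | cons a l ih =>
    obtain ⟨h0, h1, h2⟩ := ih
    rw [List.map_cons, List.prod_cons, add_mul, one_mul, mul_assoc]
    have e0 : ∀ p : ℝ[X], (C a * (X * p)).coeff 0 = 0 := fun p => by simp
    have e1 : ∀ p : ℝ[X], (C a * (X * p)).coeff 1 = a * p.coeff 0 := fun p => by
      rw [coeff_C_mul, coeff_X_mul p 0]
    have e2 : ∀ p : ℝ[X], (C a * (X * p)).coeff 2 = a * p.coeff 1 := fun p => by
      rw [coeff_C_mul, coeff_X_mul p 1]
    simp only [coeff_add, e0, e1, e2, h0, List.sum_cons, List.map_cons, ← h2]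
    refine ⟨by simp, by rw [h1]; ring, by ring⟩

theorem prod_coeff_bound (l : List ℝ) (M : ℝ) (hM : 0 ≤ M) (hl : ∀ a ∈ l, |a| ≤ M) (k : ℕ) :
    |((l.map fun a => 1 + C a * X).prod : ℝ[X]).coeff k| ≤ 2 ^ l.length * M ^ k := by
  induction l generalizing k with
  | nil =>
    rcases k with _ | k
    · simp
    · simp [coeff_one]; positivity
  | cons a l ih =>
    have ha := hl a (by simp)
    have ih' := ih (fun b hb => hl b (by simp [hb]))
    rw [List.map_cons, List.prod_cons, add_mul, one_mul, mul_assoc, coeff_add, coeff_C_mul,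
      List.length_cons]
    rcases k with _ | k
    · rw [coeff_X_mul_zero, mul_zero, add_zero]
      have := ih' 0
      have h2 : (0:ℝ) < 2 ^ l.length := by positivity
      rw [pow_succ]; simp only [pow_zero, mul_one] at this ⊢; linarith
    · rw [coeff_X_mul]
      calc _ ≤ |((l.map fun a => 1 + C a * X).prod : ℝ[X]).coeff (k+1)|
            + |a| * |((l.map fun a => 1 + C a * X).prod : ℝ[X]).coeff k| := by
              rw [← abs_mul]; exact abs_add_le _ _
        _ ≤ 2 ^ l.length * M ^ (k+1) + M * (2 ^ l.length * M ^ k) := by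
              gcongr
              · exact ih' _
              · exact ih' _
        _ = _ := by ring

theorem list_sq_le (l : List ℝ) (a : ℝ) (ha : a ∈ l) : a ^ 2 ≤ (l.map (· ^ 2)).sum := by
  refine List.single_le_sum (l := l.map (· ^ 2)) ?_ _ (List.mem_map_of_mem ha)
  intro x hx
  obtain ⟨b, -, rfl⟩ := List.mem_map.1 hx
  positivity

theorem list_sum_sq_le (l : List ℝ) : l.sum ^ 2 ≤ l.length * (l.map (· ^ 2)).sum := by
  have h := sq_sum_le_card_mul_sum_sq (s := (Finset.univ : Finset (Fin l.length)))
    (f := fun i => l[i])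
  rw [← Fin.sum_univ_fun_getElem l (· ^ 2)]
  simpa [Fin.sum_univ_getElem] using h

/-- Writing `f = ∏ (1 + aᵢ t)`, the quantity `f.coeff 1 ^ 2 - 2 * f.coeff 2` is `∑ aᵢ²`. It is
nonnegative, it bounds `(∑ aᵢ)²` by Cauchy–Schwarz, and it bounds every `|aᵢ|`, hence every
coefficient. -/
theorem RealRooted.coeff_facts {f : ℝ[X]} (hf : RealRooted f) (h0 : f.coeff 0 = 1) :
    0 ≤ f.coeff 1 ^ 2 - 2 * f.coeff 2 ∧
    f.coeff 1 ^ 2 ≤ f.natDegree * (f.coeff 1 ^ 2 - 2 * f.coeff 2) ∧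
    ∀ k, |f.coeff k| ≤ 2 ^ f.natDegree * √(f.coeff 1 ^ 2 - 2 * f.coeff 2) ^ k := by
  obtain ⟨l, hl, hlen⟩ := hf.exists_list h0
  obtain ⟨-, h1, h2⟩ := prod_coeff_facts l
  rw [← hl] at h1 h2
  refine ⟨?_, ?_, fun k => ?_⟩
  · rw [h2]
    apply List.sum_nonneg
    intro x hx
    obtain ⟨b, -, rfl⟩ := List.mem_map.1 hx
    positivity
  · rw [h2, h1, ← hlen]; exact list_sum_sq_le l
  · have := prod_coeff_bound l (√(f.coeff 1 ^ 2 - 2 * f.coeff 2)) (Real.sqrt_nonneg _)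
      (fun a ha => by rw [h2]; exact Real.abs_le_sqrt (list_sq_le l a ha)) k
    rwa [← hl, hlen] at this

/-! ### Families of real-rooted polynomials -/

theorem X_pow_dvd_of_bound (k : ℕ) (p : ℝ[X]) (B : ℝ → ℝ) (hB : ContinuousAt B 0)
    (h : ∀ᶠ y in 𝓝[≠] (0 : ℝ), |p.eval y| ≤ |y| ^ k * B y) : X ^ k ∣ p := by
  induction k generalizing p with
  | zero => simp
  | succ k ih =>
    have hp : Tendsto (fun y => |p.eval y|) (𝓝[≠] 0) (𝓝 |p.eval 0|) :=
      (p.continuous.abs.tendsto 0).mono_left nhdsWithin_le_nhds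
    have hb : Tendsto (fun y : ℝ => |y| ^ (k + 1) * B y) (𝓝[≠] 0) (𝓝 (|(0:ℝ)| ^ (k + 1) * B 0)) :=
      ((continuous_abs.pow (k + 1)).continuousAt.mul hB).tendsto.mono_left nhdsWithin_le_nhds
    have h0 := le_of_tendsto_of_tendsto hp hb h
    have hroot : p.eval 0 = 0 := by simpa using h0
    obtain ⟨q, rfl⟩ : X ∣ p := X_dvd_iff.2 (by rw [coeff_zero_eq_eval_zero, hroot])
    rw [pow_succ', mul_dvd_mul_iff_left X_ne_zero]
    apply ih
    filter_upwards [h, self_mem_nhdsWithin] with y hy hy0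
    have hpos : 0 < |y| := abs_pos.2 hy0
    rw [eval_mul, eval_X, abs_mul, pow_succ', mul_assoc] at hy
    exact le_of_mul_le_mul_left hy hpos

/-- A zero at which a polynomial does not change sign has multiplicity at least two. -/
theorem X_sq_dvd_of_nonneg (p : ℝ[X]) (h0 : p.eval 0 = 0)
    (h : ∀ᶠ y in 𝓝 (0 : ℝ), 0 ≤ p.eval y) : X ^ 2 ∣ p := by
  obtain ⟨q, rfl⟩ : X ∣ p := X_dvd_iff.2 (by rw [coeff_zero_eq_eval_zero, h0])
  rw [pow_two, mul_dvd_mul_iff_left X_ne_zero, X_dvd_iff, coeff_zero_eq_eval_zero]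
  have hq : Tendsto (fun y => q.eval y) (𝓝 0) (𝓝 (q.eval 0)) := q.continuous.tendsto 0
  apply le_antisymm
  · refine le_of_tendsto (hq.mono_left (nhdsWithin_le_nhds (s := Set.Iio 0))) ?_
    filter_upwards [nhdsWithin_le_nhds h, self_mem_nhdsWithin] with y hy hy0
    rw [eval_mul, eval_X] at hy
    exact nonpos_of_mul_nonneg_right hy hy0
  · refine ge_of_tendsto (hq.mono_left (nhdsWithin_le_nhds (s := Set.Ioi 0))) ?_
    filter_upwards [nhdsWithin_le_nhds h, self_mem_nhdsWithin] with y hy hy0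
    rw [eval_mul, eval_X] at hy
    exact nonneg_of_mul_nonneg_right hy hy0

theorem RealRooted.iterate_derivative {f : ℝ[X]} (hf : RealRooted f) (r : ℕ)
    (h : Polynomial.derivative^[r] f ≠ 0) : RealRooted (Polynomial.derivative^[r] f) := by
  induction r with
  | zero => exact hf
  | succ r ih =>
    rw [Function.iterate_succ_apply'] at h ⊢
    exact (ih fun h' => h (by rw [h', derivative_zero])).derivative h

/-- `RealRooted.coeff_facts` without the normalisation of the constant coefficient. -/
theorem RealRooted.coeff_facts_scaled {f : ℝ[X]} (hf : RealRooted f) (h0 : f.coeff 0 ≠ 0) :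
    0 ≤ f.coeff 1 ^ 2 - 2 * f.coeff 0 * f.coeff 2 ∧
    ∀ k, |f.coeff k| ≤ |f.coeff 0| * (2 ^ f.natDegree *
      √((f.coeff 1 ^ 2 - 2 * f.coeff 0 * f.coeff 2) / f.coeff 0 ^ 2) ^ k) := by
  have hg : RealRooted (C (f.coeff 0)⁻¹ * f) := fun z hz => hf z <| by
    simpa [h0] using hz
  obtain ⟨h1, -, h2⟩ := hg.coeff_facts (by simp [h0])
  have hdeg : (C (f.coeff 0)⁻¹ * f).natDegree = f.natDegree :=
    natDegree_C_mul (inv_ne_zero h0)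
  have hW : (C (f.coeff 0)⁻¹ * f).coeff 1 ^ 2 - 2 * (C (f.coeff 0)⁻¹ * f).coeff 2
      = (f.coeff 1 ^ 2 - 2 * f.coeff 0 * f.coeff 2) / f.coeff 0 ^ 2 := by
    simp only [coeff_C_mul]; field_simp
  rw [hW] at h1 h2
  have hpos : 0 < f.coeff 0 ^ 2 := by positivity
  refine ⟨?_, fun k => ?_⟩
  · have := mul_nonneg h1 hpos.le
    rwa [div_mul_cancel₀ _ hpos.ne'] at this
  · have := h2 k
    rw [hdeg, coeff_C_mul, abs_mul, abs_inv, inv_mul_le_iff₀ (abs_pos.2 h0)] at this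
    exact this

/-- Let `F(y, t) = ∑ eₖ(y) tᵏ` be real-rooted in `t` for every real `y`, with `F(0, t)` of degree
exactly `r`. Then `eₖ₊ᵣ` vanishes to order `k` at `y = 0`. The `r`-th derivative in `t` is
real-rooted with nonzero constant coefficient near `y = 0`, and its sum of squares of reciprocal
zeros is nonnegative and vanishes at `y = 0`, so it is `O(y²)`; this bounds all coefficients. -/
theorem X_pow_dvd_coeff (F : ℝ[X][X]) (hF : ∀ y : ℝ, RealRooted (F.map (evalRingHom y)))
    (r : ℕ) (hr : (F.coeff r).eval 0 ≠ 0) (hr' : ∀ k, r < k → (F.coeff k).eval 0 = 0) (k : ℕ) :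
    X ^ k ∣ F.coeff (k + r) := by
  set D : ℝ[X][X] := derivative^[r] F with hD
  have hDc : ∀ k, D.coeff k = (k + r).descFactorial r • F.coeff (k + r) := fun k => by
    rw [hD, coeff_iterate_derivative]
  have hdf : ∀ k, ((k + r).descFactorial r : ℝ) ≠ 0 := fun k => by
    exact_mod_cast (Nat.descFactorial_pos.2 (Nat.le_add_left r k)).ne'
  have hd0 : (D.coeff 0).eval 0 ≠ 0 := by
    rw [hDc]; simpa using hr
  have hdk : ∀ k, 0 < k → (D.coeff k).eval 0 = 0 := fun k hk => by
    rw [hDc]; simp [hr' (k + r) (by omega)]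
  have hne : ∀ᶠ y in 𝓝 (0 : ℝ), (D.coeff 0).eval y ≠ 0 :=
    (D.coeff 0).continuous.continuousAt.eventually_ne hd0
  have hRR : ∀ y : ℝ, (D.coeff 0).eval y ≠ 0 → RealRooted (D.map (evalRingHom y)) := by
    intro y hy
    have hmap : D.map (evalRingHom y) = derivative^[r] (F.map (evalRingHom y)) :=
      (iterate_derivative_map _ _ _).symm
    rw [hmap]
    refine (hF y).iterate_derivative r fun h => hy ?_
    rw [← hmap] at h
    simpa using congrArg (fun p => coeff p 0) h
  set W : ℝ[X] := D.coeff 1 ^ 2 - 2 * D.coeff 0 * D.coeff 2 with hWdef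
  obtain ⟨V, hV⟩ : X ^ 2 ∣ W := by
    apply X_sq_dvd_of_nonneg
    · simp [hWdef, hdk]
    · filter_upwards [hne] with y hy
      have := ((hRR y hy).coeff_facts_scaled (by simpa using hy)).1
      simpa [hWdef] using this
  have hdvd : X ^ k ∣ D.coeff k := by
    refine X_pow_dvd_of_bound k _ (fun y => |(D.coeff 0).eval y| *
      (2 ^ D.natDegree * √(V.eval y / (D.coeff 0).eval y ^ 2) ^ k)) ?_ ?_
    · refine (D.coeff 0).continuous.continuousAt.abs.mul (continuousAt_const.mul ?_)
      exact ((V.continuous.continuousAt.div ((D.coeff 0).continuous.continuousAt.pow 2)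
        (pow_ne_zero 2 hd0)).sqrt).pow k
    · filter_upwards [nhdsWithin_le_nhds hne] with y hy
      have h := ((hRR y hy).coeff_facts_scaled (by simpa using hy)).2 k
      have hW : (D.coeff 1).eval y ^ 2 - 2 * (D.coeff 0).eval y * (D.coeff 2).eval y
          = y ^ 2 * V.eval y := by
        have := congrArg (eval y) hV
        simpa [hWdef] using this
      simp only [coeff_map, coe_evalRingHom] at h
      rw [hW, mul_div_assoc, Real.sqrt_mul (sq_nonneg y), Real.sqrt_sq_eq_abs, mul_pow] at h
      refine h.trans ?_
      have hdeg : (2 : ℝ) ^ (D.map (evalRingHom y)).natDegree ≤ 2 ^ D.natDegree :=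
        pow_le_pow_right₀ (by norm_num) natDegree_map_le
      calc _ ≤ |(D.coeff 0).eval y| * (2 ^ D.natDegree *
            (|y| ^ k * √(V.eval y / (D.coeff 0).eval y ^ 2) ^ k)) := by gcongr
        _ = _ := by ring
  rw [X_pow_dvd_iff] at hdvd ⊢
  intro d hd
  have := hdvd d hd
  rw [hDc, coeff_smul, nsmul_eq_mul] at this
  exact (mul_eq_zero.1 this).resolve_left (hdf k)

/-- If `S(x, y) = ∑ s i j xⁱ yʲ` is a real zero polynomial and `S(x, 0)` has degree `r`, then
`S` has degree at most `r` in `x`. -/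
theorem array_degree (N : ℕ) (s : ℕ → ℕ → ℝ)
    (hs : ∀ (a b : ℝ) (t : ℂ), ∑ i ∈ Finset.range N, ∑ j ∈ Finset.range N,
      (s i j : ℂ) * (t * a) ^ i * (t * b) ^ j = 0 → t.im = 0)
    (r : ℕ) (hrN : r < N) (hr : s r 0 ≠ 0) (hr' : ∀ i, r < i → i < N → s i 0 = 0)
    (i j : ℕ) (hi : r < i) (hiN : i < N) (hjN : j < N) : s i j = 0 := by
  set F : ℝ[X][X] := ∑ i ∈ Finset.range N, ∑ j ∈ Finset.range N,
    monomial (i + j) (monomial j (s i j)) with hF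
  have hcoeff : ∀ i j, i < N → j < N → (F.coeff (i + j)).coeff j = s i j := by
    intro i j hi hj
    simp only [hF, finsetSum_coeff, coeff_monomial]
    rw [Finset.sum_eq_single i, Finset.sum_eq_single j]
    · simp
    · intro b _ hb
      rw [if_neg (by omega), coeff_zero]
    · intro h; exact absurd (Finset.mem_range.2 hj) h
    · intro a _ ha
      refine Finset.sum_eq_zero fun b _ => ?_
      split_ifs with h
      · rw [coeff_monomial, if_neg (by omega)]
      · simp
    · intro h; exact absurd (Finset.mem_range.2 hi) h
  have hbig : ∀ i, N ≤ i → (F.coeff i).coeff 0 = 0 := by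
    intro i hi
    simp only [hF, finsetSum_coeff, coeff_monomial]
    refine Finset.sum_eq_zero fun a ha => Finset.sum_eq_zero fun b hb => ?_
    rw [Finset.mem_range] at ha hb
    split_ifs with h
    · rw [coeff_monomial, if_neg (by omega)]
    · simp
  have hRR : ∀ y : ℝ, RealRooted (F.map (evalRingHom y)) := by
    intro y z hz
    apply hs 1 y z
    rw [← hz]
    simp only [hF, Polynomial.map_sum, map_sum, map_monomial, coe_evalRingHom, eval_monomial,
      aeval_monomial, map_mul, map_pow]
    refine Finset.sum_congr rfl fun a _ => Finset.sum_congr rfl fun b _ => ?_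
    simp only [Complex.coe_algebraMap]
    push_cast
    ring
  have h0 : ∀ k, k < N → (F.coeff k).eval 0 = s k 0 := fun k hk => by
    rw [← coeff_zero_eq_eval_zero]; exact hcoeff k 0 hk (by omega)
  have key := X_pow_dvd_coeff F hRR r (by rwa [h0 r hrN]) (fun k hk => by
    rcases lt_or_ge k N with h | h
    · rw [h0 k h, hr' k hk h]
    · rw [← coeff_zero_eq_eval_zero, hbig k h]) (i + j - r)
  rw [X_pow_dvd_iff] at key
  have := key j (by omega)
  rwa [show i + j - r + r = i + j by omega, hcoeff i j hiN hjN] at this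

/-! ### Restrictions of real zero polynomials to lines and planes -/

theorem poly_ext {f g : ℝ[X]} (h : ∀ z : ℂ, aeval z f = aeval z g) : f = g := by
  apply Polynomial.map_injective (algebraMap ℝ ℂ) (algebraMap ℝ ℂ).injective
  refine Polynomial.funext fun z => ?_
  rw [eval_map_algebraMap, eval_map_algebraMap, h]

/-- The restriction `t ↦ Q(t v)` of `Q` to the line through `0` in direction `v`. -/
noncomputable def linePoly (Q : MvPolynomial (Fin 4) ℝ) (v : Fin 4 → ℝ) : ℝ[X] :=
  MvPolynomial.aeval (fun i => C (v i) * X) Q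

theorem aeval_linePoly (Q : MvPolynomial (Fin 4) ℝ) (v : Fin 4 → ℝ) (z : ℂ) :
    aeval z (linePoly Q v) = MvPolynomial.aeval (fun i => z * (v i : ℂ)) Q := by
  rw [linePoly, MvPolynomial.comp_aeval_apply]
  congr 2
  funext i
  rw [map_mul, aeval_C, aeval_X, mul_comm, Complex.coe_algebraMap]

theorem realRooted_linePoly {Q : MvPolynomial (Fin 4) ℝ} (hQ : IsRealZero Q) (v : Fin 4 → ℝ) :
    RealRooted (linePoly Q v) := fun z hz => hQ v z (by rwa [← aeval_linePoly])

/-- The coefficients of the two-variable polynomial `Q(x u + y v)`. The bound `N` exceeds its degree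
in each variable. -/
theorem exists_array (Q : MvPolynomial (Fin 4) ℝ) (u v : Fin 4 → ℝ) :
    ∃ (N : ℕ) (s : ℕ → ℕ → ℝ), 0 < N ∧ ∀ x y : ℂ,
      MvPolynomial.aeval (fun i => x * (u i : ℂ) + y * (v i : ℂ)) Q =
        ∑ i ∈ Finset.range N, ∑ j ∈ Finset.range N, (s i j : ℂ) * x ^ i * y ^ j := by
  set P : ℝ[X][X] := MvPolynomial.aeval (R := ℝ)
    (fun i => C (C (u i)) * X + C (C (v i) * X)) Q with hP
  set N := P.natDegree + P.support.sup (fun i => (P.coeff i).natDegree) + 1 with hN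
  have hNP : P.natDegree < N := by omega
  have hNc : ∀ i, (P.coeff i).natDegree < N := by
    intro i
    by_cases h : i ∈ P.support
    · have := Finset.le_sup (f := fun i => (P.coeff i).natDegree) h
      omega
    · rw [notMem_support_iff.1 h, natDegree_zero]; omega
  refine ⟨N, fun i j => (P.coeff i).coeff j, by omega, fun x y => ?_⟩
  have hφ := MvPolynomial.map_aeval (R := ℝ)
    (fun i => C (C (u i)) * X + C (C (v i) * X) : Fin 4 → ℝ[X][X])
    (eval₂RingHom (aeval (R := ℝ) y).toRingHom x) Q
  rw [← hP, coe_eval₂RingHom, eval₂_eq_sum_range' _ hNP] at hφ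
  have hcomp : (eval₂RingHom (aeval (R := ℝ) y).toRingHom x).comp (algebraMap ℝ ℝ[X][X])
      = algebraMap ℝ ℂ := by
    ext a
    simp
  rw [hcomp] at hφ
  rw [MvPolynomial.aeval_def, ← MvPolynomial.coe_eval₂Hom]
  have hg : (fun i => (eval₂RingHom (aeval (R := ℝ) y).toRingHom x)
      (C (C (u i)) * X + C (C (v i) * X))) = fun i => x * (u i : ℂ) + y * (v i : ℂ) := by
    funext i
    simp [mul_comm x, mul_comm y]
  rw [← hg]
  refine hφ.symm.trans (Finset.sum_congr rfl fun i _ => ?_)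
  have : (aeval (R := ℝ) y).toRingHom (P.coeff i)
      = ∑ j ∈ Finset.range N, ((P.coeff i).coeff j : ℂ) * y ^ j := by
    change aeval y (P.coeff i) = _
    rw [aeval_def, eval₂_eq_sum_range' _ (hNc i)]
    rfl
  rw [this, Finset.sum_mul]
  exact Finset.sum_congr rfl fun j _ => by ring

theorem exists_array_of_isRealZero {Q : MvPolynomial (Fin 4) ℝ} (hQ : IsRealZero Q) (u v : Fin 4 → ℝ) :
    ∃ (N : ℕ) (s : ℕ → ℕ → ℝ),
      (∀ (a b : ℝ) (t : ℂ), ∑ i ∈ Finset.range N, ∑ j ∈ Finset.range N,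
        (s i j : ℂ) * (t * a) ^ i * (t * b) ^ j = 0 → t.im = 0) ∧
      (∀ i, (linePoly Q u).coeff i = if i < N then s i 0 else 0) ∧
      (∀ j, (linePoly Q v).coeff j = if j < N then s 0 j else 0) ∧
      linePoly Q (u + v) = ∑ i ∈ Finset.range N, ∑ j ∈ Finset.range N,
        C (s i j) * X ^ (i + j) := by
  obtain ⟨N, s, hN, h⟩ := exists_array Q u v
  have hN0 : 0 ∈ Finset.range N := Finset.mem_range.2 hN
  refine ⟨N, s, fun a b t ht => ?_, ?_, ?_, ?_⟩
  · rw [← h] at ht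
    refine hQ (fun i => a * u i + b * v i) t ?_
    rw [← ht]
    congr 2
    funext i
    push_cast
    ring
  · have : linePoly Q u = ∑ i ∈ Finset.range N, C (s i 0) * X ^ i := by
      refine poly_ext fun z => ?_
      have := h z 0
      simp only [zero_mul, add_zero] at this
      rw [aeval_linePoly, this, map_sum]
      refine Finset.sum_congr rfl fun i _ => ?_
      rw [Finset.sum_eq_single_of_mem 0 hN0 fun j _ hj => by simp [hj]]
      simp
    intro i
    simp [this, finsetSum_coeff, coeff_X_pow]
  · have : linePoly Q v = ∑ j ∈ Finset.range N, C (s 0 j) * X ^ j := by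
      refine poly_ext fun z => ?_
      have := h 0 z
      simp only [zero_mul, zero_add] at this
      rw [aeval_linePoly, this, map_sum, Finset.sum_eq_single_of_mem 0 hN0 fun i _ hi => by simp [hi]]
      simp
    intro i
    simp [this, finsetSum_coeff, coeff_X_pow]
  · refine poly_ext fun z => ?_
    have := h z z
    rw [aeval_linePoly]
    simp only [Pi.add_apply, Complex.ofReal_add, mul_add]
    rw [this]
    simp [pow_add, mul_assoc]

/-- Subadditivity of rank for real zero polynomials, in the case of two directions of rank `m`:
`Q(x u + y v)` has degree at most `m` in `x` and in `y`. -/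
theorem natDegree_linePoly_add_le {Q : MvPolynomial (Fin 4) ℝ} (hQ : IsRealZero Q)
    {u v : Fin 4 → ℝ} {m : ℕ} (hu : linePoly Q u = (1 + X) ^ m) (hv : linePoly Q v = (1 + X) ^ m) :
    (linePoly Q (u + v)).natDegree ≤ 2 * m := by
  obtain ⟨N, s, hs, h1, h2, h3⟩ := exists_array_of_isRealZero hQ u v
  rw [hu] at h1
  rw [hv] at h2
  simp only [coeff_one_add_X_pow] at h1 h2
  have hmN : m < N := by
    by_contra hc
    have := h1 m
    simp [hc] at this
  have hA : ∀ i j, m < i → i < N → j < N → s i j = 0 := fun i j hi hiN hjN =>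
    array_degree N s hs m hmN (by have := h1 m; simp [hmN] at this; simp [← this])
      (fun i hi hiN => by
        have := h1 i; rw [if_pos hiN, Nat.choose_eq_zero_of_lt hi] at this; simp [← this])
      i j hi hiN hjN
  have hB : ∀ i j, m < j → i < N → j < N → s i j = 0 := fun i j hj hiN hjN =>
    array_degree N (fun i j => s j i)
      (fun a b t ht => hs b a t (by
        rw [← ht, Finset.sum_comm]
        exact Finset.sum_congr rfl fun i _ => Finset.sum_congr rfl fun j _ => by ring))
      m hmN (by have := h2 m; simp [hmN] at this; simp [← this])
      (fun i hi hiN => by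
        have := h2 i; rw [if_pos hiN, Nat.choose_eq_zero_of_lt hi] at this; simp [← this])
      j i hj hjN hiN
  rw [h3]
  refine natDegree_sum_le_of_forall_le _ _ fun i hi => natDegree_sum_le_of_forall_le _ _ fun j hj => ?_
  rw [Finset.mem_range] at hi hj
  by_cases h : m < i ∨ m < j
  · have : s i j = 0 := h.elim (fun h => hA i j h hi hj) (fun h => hB i j h hi hj)
    simp [this]
  · exact (natDegree_C_mul_X_pow_le _ _).trans (by omega)

/-- If `Q` is constant on the line through `0` in direction `u`, it is invariant under translation
along `u`. -/
theorem linePoly_add_of_eq_one {Q : MvPolynomial (Fin 4) ℝ} (hQ : IsRealZero Q)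
    {u : Fin 4 → ℝ} (hu : linePoly Q u = 1) (v : Fin 4 → ℝ) :
    linePoly Q (u + v) = linePoly Q v := by
  obtain ⟨N, s, hs, h1, h2, h3⟩ := exists_array_of_isRealZero hQ u v
  rw [hu] at h1
  simp only [coeff_one] at h1
  have hN : 0 < N := by
    by_contra hc
    have := h1 0
    simp [hc] at this
  have hA : ∀ i j, 0 < i → i < N → j < N → s i j = 0 := fun i j hi hiN hjN =>
    array_degree N s hs 0 hN (by have := h1 0; simp [hN] at this; simp [← this])
      (fun i hi hiN => by
        have := h1 i; rw [if_pos hiN, if_neg hi.ne'] at this; exact this.symm)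
      i j hi hiN hjN
  rw [h3, Finset.sum_eq_single_of_mem 0 (Finset.mem_range.2 hN)]
  · ext j
    rw [h2]
    simp [finsetSum_coeff, coeff_X_pow]
  · intro i hi hi0
    refine Finset.sum_eq_zero fun j hj => ?_
    rw [Finset.mem_range] at hi hj
    simp [hA i j (by omega) hi hj]

/-- The coefficients of `t` and `t²` in `Q(t v)` are a linear and a quadratic form in `v`. -/
theorem linePoly_coeff (Q : MvPolynomial (Fin 4) ℝ) :
    ∃ (c : ℝ) (l : Fin 4 → ℝ) (b : Fin 4 → Fin 4 → ℝ), ∀ v,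
      (linePoly Q v).coeff 0 = c ∧ (linePoly Q v).coeff 1 = ∑ i, l i * v i ∧
      (linePoly Q v).coeff 2 = ∑ i, ∑ j, b i j * v i * v j := by
  induction Q using MvPolynomial.induction_on with
  | C a =>
    refine ⟨a, 0, 0, fun v => ?_⟩
    simp [linePoly, coeff_C, algebraMap_eq]
  | add p q hp hq =>
    obtain ⟨c, l, b, h⟩ := hp
    obtain ⟨c', l', b', h'⟩ := hq
    refine ⟨c + c', l + l', b + b', fun v => ?_⟩
    have e : linePoly (p + q) v = linePoly p v + linePoly q v := map_add _ _ _
    simp only [e, coeff_add, h v, h' v, Pi.add_apply, add_mul, Finset.sum_add_distrib, and_self]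
  | mul_X p n hp =>
    obtain ⟨c, l, b, h⟩ := hp
    refine ⟨0, Pi.single n c, fun i j => if j = n then l i else 0, fun v => ?_⟩
    have e : linePoly (p * MvPolynomial.X n) v = C (v n) * linePoly p v * X := by
      simp only [linePoly, map_mul, MvPolynomial.aeval_X]; ring
    refine ⟨by simp [e], ?_, ?_⟩
    · rw [e, coeff_mul_X, coeff_C_mul, (h v).1, Finset.sum_eq_single n] <;>
        simp +contextual [mul_comm]
    · rw [e, coeff_mul_X, coeff_C_mul, (h v).2.1]
      simp [Finset.mul_sum, mul_comm]

theorem linePoly_setVarZero (Q : MvPolynomial (Fin 4) ℝ) (j : Fin 4) (v : Fin 4 → ℝ)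
    (hv : v j = 0) : linePoly (setVarZero j Q) v = linePoly Q v := by
  rw [linePoly, setVarZero, MvPolynomial.comp_aeval_apply, linePoly]
  congr 2
  funext i
  by_cases h : i = j
  · subst h; simp [hv]
  · simp [h]

/-! ### The two polynomials and their amalgams -/

theorem im_eq_zero_of_linear {t : ℂ} {a : ℝ} (h : 1 + t * a = 0) : t.im = 0 := by
  have h1 := congrArg Complex.re h
  have h2 := congrArg Complex.im h
  simp at h1 h2
  rcases h2 with h2 | h2
  · exact h2
  · simp [h2] at h1

theorem im_inv_add (τ : ℂ) (a : ℝ) : ((τ + a)⁻¹).im = -τ.im * (Complex.normSq (τ + a))⁻¹ := by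
  rw [Complex.inv_im]; simp [div_eq_mul_inv]

/-- The determinant of `[[1 + x₁ + x₃, 0, x₂], [0, 1 - x₁, x₂], [x₂, x₂, 1]]`. Here the coefficient
matrix of `x₃` is the projection onto the eigenvector of that of `x₁` for the eigenvalue `1`. -/
noncomputable def exQ₁ : MvPolynomial (Fin 4) ℝ :=
  (1 + MvPolynomial.X 0 + MvPolynomial.X 2) * (1 - MvPolynomial.X 0)
    - MvPolynomial.X 1 ^ 2 * (2 + MvPolynomial.X 2)

/-- The determinant of `[[1 + x₁ + x₄, √2 x₂], [√2 x₂, 1 - x₁]]`. Here the coefficient matrix of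
`x₄` is the projection onto the eigenvector of that of `x₁` for the eigenvalue `1`. -/
noncomputable def exQ₂ : MvPolynomial (Fin 4) ℝ :=
  (1 + MvPolynomial.X 0 + MvPolynomial.X 3) * (1 - MvPolynomial.X 0)
    - 2 * MvPolynomial.X 1 ^ 2

/-- With `τ = 1/t`, a zero satisfies `τ = x₂² (1/(τ + x₁ + x₃) + 1/(τ - x₁))`. If `τ` is not real,
the imaginary parts of the two sides have opposite signs. -/
theorem isRealZero_exQ₁ : IsRealZero exQ₁ := by
  intro v t ht
  by_contra him
  have ht0 : t ≠ 0 := by rintro rfl; simp at him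
  have hA : t⁻¹ + ((v 0 + v 2 : ℝ) : ℂ) ≠ 0 := fun h => him <| im_eq_zero_of_linear
    (a := v 0 + v 2) (by rw [← mul_inv_cancel₀ ht0, ← mul_add, h, mul_zero])
  have hB : t⁻¹ + ((-v 0 : ℝ) : ℂ) ≠ 0 := fun h => him <| im_eq_zero_of_linear
    (a := -v 0) (by rw [← mul_inv_cancel₀ ht0, ← mul_add, h, mul_zero])
  simp only [exQ₁, map_sub, map_mul, map_add, map_pow, map_one, MvPolynomial.aeval_X, map_ofNat] at ht
  have key : t⁻¹ = ((v 1 ^ 2 : ℝ) : ℂ) *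
      ((t⁻¹ + ((v 0 + v 2 : ℝ) : ℂ))⁻¹ + (t⁻¹ + ((-v 0 : ℝ) : ℂ))⁻¹) := by
    have h2 : t⁻¹ * ((t⁻¹ + ((v 0 + v 2 : ℝ) : ℂ)) * (t⁻¹ + ((-v 0 : ℝ) : ℂ))) =
        ((v 1 ^ 2 : ℝ) : ℂ) *
          ((t⁻¹ + ((-v 0 : ℝ) : ℂ)) + (t⁻¹ + ((v 0 + v 2 : ℝ) : ℂ))) := by
      push_cast
      field_simp
      linear_combination ht
    rw [inv_add_inv hA hB, ← mul_div_assoc, eq_div_iff (mul_ne_zero hA hB), h2]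
    ring
  have hi := congrArg Complex.im key
  rw [Complex.im_ofReal_mul, Complex.add_im, im_inv_add, im_inv_add] at hi
  have hτ : (t⁻¹).im ≠ 0 := by
    rw [Complex.inv_im]
    exact div_ne_zero (neg_ne_zero.2 him) (Complex.normSq_pos.2 ht0).ne'
  have n1 := inv_nonneg.2 (Complex.normSq_nonneg (t⁻¹ + ((v 0 + v 2 : ℝ) : ℂ)))
  have n2 := inv_nonneg.2 (Complex.normSq_nonneg (t⁻¹ + ((-v 0 : ℝ) : ℂ)))
  set n := (Complex.normSq (t⁻¹ + ((v 0 + v 2 : ℝ) : ℂ)))⁻¹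
  set n' := (Complex.normSq (t⁻¹ + ((-v 0 : ℝ) : ℂ)))⁻¹
  have hz : (t⁻¹).im * (1 + v 1 ^ 2 * (n + n')) = 0 := by linear_combination hi
  have hpos : 0 < 1 + v 1 ^ 2 * (n + n') := by positivity
  exact (mul_ne_zero hτ hpos.ne') hz

/-- With `τ = 1/t`, a zero satisfies `τ + x₁ + x₄ = 2 x₂² / (τ - x₁)`. If `τ` is not real, the
imaginary parts of the two sides have opposite signs. -/
theorem isRealZero_exQ₂ : IsRealZero exQ₂ := by
  intro v t ht
  by_contra him
  have ht0 : t ≠ 0 := by rintro rfl; simp at him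
  have hB : t⁻¹ + ((-v 0 : ℝ) : ℂ) ≠ 0 := fun h => him <| im_eq_zero_of_linear
    (a := -v 0) (by rw [← mul_inv_cancel₀ ht0, ← mul_add, h, mul_zero])
  simp only [exQ₂, map_sub, map_mul, map_add, map_pow, map_one, MvPolynomial.aeval_X, map_ofNat] at ht
  have key : t⁻¹ + ((v 0 + v 3 : ℝ) : ℂ) = ((2 * v 1 ^ 2 : ℝ) : ℂ) *
      (t⁻¹ + ((-v 0 : ℝ) : ℂ))⁻¹ := by
    rw [eq_mul_inv_iff_mul_eq₀ hB]
    push_cast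
    field_simp
    linear_combination ht
  have hi := congrArg Complex.im key
  rw [Complex.im_ofReal_mul, im_inv_add, Complex.add_im, Complex.ofReal_im] at hi
  have hτ : (t⁻¹).im ≠ 0 := by
    rw [Complex.inv_im]
    exact div_ne_zero (neg_ne_zero.2 him) (Complex.normSq_pos.2 ht0).ne'
  have n2 := inv_nonneg.2 (Complex.normSq_nonneg (t⁻¹ + ((-v 0 : ℝ) : ℂ)))
  set n' := (Complex.normSq (t⁻¹ + ((-v 0 : ℝ) : ℂ)))⁻¹
  have hz : (t⁻¹).im * (1 + 2 * v 1 ^ 2 * n') = 0 := by linear_combination hi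
  have hpos : 0 < 1 + 2 * v 1 ^ 2 * n' := by positivity
  exact (mul_ne_zero hτ hpos.ne') hz

theorem vars_exQ₁ : exQ₁.vars ⊆ {0, 1, 2} := by
  have h : exQ₁ ∈ MvPolynomial.supported ℝ ({0, 1, 2} : Set (Fin 4)) := by
    have hX : ∀ i ∈ ({0, 1, 2} : Set (Fin 4)), (MvPolynomial.X i : MvPolynomial (Fin 4) ℝ) ∈
        MvPolynomial.supported ℝ ({0, 1, 2} : Set (Fin 4)) :=
      fun i hi => MvPolynomial.X_mem_supported.2 hi
    have h0 := hX 0 (by simp)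
    have h1 := hX 1 (by simp)
    have h2 := hX 2 (by simp)
    exact sub_mem (mul_mem (add_mem (add_mem (one_mem _) h0) h2) (sub_mem (one_mem _) h0))
      (mul_mem (pow_mem h1 2) (add_mem (ofNat_mem _ 2) h2))
  rw [MvPolynomial.mem_supported] at h
  intro i hi
  simpa using h hi

theorem vars_exQ₂ : exQ₂.vars ⊆ {0, 1, 3} := by
  have h : exQ₂ ∈ MvPolynomial.supported ℝ ({0, 1, 3} : Set (Fin 4)) := by
    have hX : ∀ i ∈ ({0, 1, 3} : Set (Fin 4)), (MvPolynomial.X i : MvPolynomial (Fin 4) ℝ) ∈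
        MvPolynomial.supported ℝ ({0, 1, 3} : Set (Fin 4)) :=
      fun i hi => MvPolynomial.X_mem_supported.2 hi
    have h0 := hX 0 (by simp)
    have h1 := hX 1 (by simp)
    have h3 := hX 3 (by simp)
    exact sub_mem (mul_mem (add_mem (add_mem (one_mem _) h0) h3) (sub_mem (one_mem _) h0))
      (mul_mem (ofNat_mem _ 2) (pow_mem h1 2))
  rw [MvPolynomial.mem_supported] at h
  intro i hi
  simpa using h hi

theorem setVarZero_exQ₁_eq : setVarZero 2 exQ₁ = setVarZero 3 exQ₂ := by
  simp only [setVarZero, exQ₁, exQ₂, map_sub, map_mul, map_add, map_pow, map_one, map_ofNat,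
    MvPolynomial.aeval_X]
  simp
  ring

theorem linePoly_exQ₁ (v : Fin 4 → ℝ) : linePoly exQ₁ v =
    (1 + C (v 0) * X + C (v 2) * X) * (1 - C (v 0) * X)
      - (C (v 1) * X) ^ 2 * (2 + C (v 2) * X) := by
  simp [linePoly, exQ₁]

theorem linePoly_exQ₂ (v : Fin 4 → ℝ) : linePoly exQ₂ v =
    (1 + C (v 0) * X + C (v 3) * X) * (1 - C (v 0) * X) - 2 * (C (v 1) * X) ^ 2 := by
  simp [linePoly, exQ₂]

/-- The direction `e₃ - e₄` of an amalgam would be one of translation invariance, which is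
incompatible with `exQ₁ ≠ exQ₂`. -/
theorem no_amalgam (m : ℕ) (hm : 0 < m) (Q : MvPolynomial (Fin 4) ℝ) (hQ : IsRealZero Q)
    (h₁ : setVarZero 3 Q = exQ₁ ^ m) (h₂ : setVarZero 2 Q = exQ₂ ^ m) : False := by
  have hl₁ : ∀ v : Fin 4 → ℝ, v 3 = 0 → linePoly Q v = linePoly exQ₁ v ^ m := fun v hv => by
    rw [← linePoly_setVarZero Q 3 v hv, h₁, linePoly, map_pow, ← linePoly]
  have hl₂ : ∀ v : Fin 4 → ℝ, v 2 = 0 → linePoly Q v = linePoly exQ₂ v ^ m := fun v hv => by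
    rw [← linePoly_setVarZero Q 2 v hv, h₂, linePoly, map_pow, ← linePoly]
  -- `e₃`, `e₃ - e₁`, `e₄`, `e₄ - e₁` behave like projections of rank `m`, and `e₁` like the
  -- difference of two orthogonal ones.
  have hP : linePoly Q ![0, 0, 1, 0] = (1 + X) ^ m := by
    rw [hl₁ _ rfl, linePoly_exQ₁]; simp
  have hP' : linePoly Q ![-1, 0, 1, 0] = (1 + X) ^ m := by
    rw [hl₁ _ rfl, linePoly_exQ₁]; simp
  have hR : linePoly Q ![0, 0, 0, 1] = (1 + X) ^ m := by
    rw [hl₂ _ rfl, linePoly_exQ₂]; simp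
  have hR' : linePoly Q ![-1, 0, 0, 1] = (1 + X) ^ m := by
    rw [hl₂ _ rfl, linePoly_exQ₂]; simp
  have hE : linePoly Q ![1, 0, 0, 0] = ((1 + X) * (1 - X)) ^ m := by
    rw [hl₁ _ rfl, linePoly_exQ₁]; simp
  have hw : linePoly Q ![-1, 0, 1, 1] = linePoly Q (![0, 0, 1, 0] + ![-1, 0, 0, 1]) := by
    congr 1; ext i; fin_cases i <;> simp
  have hdeg : (linePoly Q ![-1, 0, 1, 1]).natDegree ≤ 2 * m := by
    rw [hw]; exact natDegree_linePoly_add_le hQ hP hR'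
  have c1 : ((1 + X) ^ m : ℝ[X]).coeff 1 = m := by simp [coeff_one_add_X_pow]
  have c2 : 2 * ((1 + X) ^ m : ℝ[X]).coeff 2 = m * (m - 1) := by
    rw [coeff_one_add_X_pow, Nat.cast_choose_two]; ring
  have d2 : ((((1 + X) * (1 - X)) ^ m : ℝ[X])).coeff 2 = -m := by
    have h0 : ∀ n : ℕ, (((1 + X) * (1 - X)) ^ n : ℝ[X]).coeff 0 = 1 := fun n => by
      simp [coeff_zero_eq_eval_zero]
    have hstep : ∀ n : ℕ, (((1 + X) * (1 - X)) ^ n : ℝ[X]).coeff 2 = -n := fun n => by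
      induction n with
      | zero => simp [coeff_one]
      | succ n ih =>
        have e : ((1 + X) * (1 - X) : ℝ[X]) ^ (n + 1)
            = ((1 + X) * (1 - X)) ^ n - ((1 + X) * (1 - X)) ^ n * X ^ 2 := by ring
        have hX := coeff_mul_X_pow (((1 + X) * (1 - X)) ^ n : ℝ[X]) 2 0
        rw [zero_add] at hX
        rw [e, coeff_sub, hX, ih, h0]
        push_cast
        ring
    exact hstep m
  obtain ⟨c, l, b, hcoef⟩ := linePoly_coeff Q
  have hc0 : ∀ v, (linePoly Q v).coeff 0 = 1 := fun v => by
    rw [(hcoef v).1, ← (hcoef ![0, 0, 1, 0]).1, hP]; simp [coeff_one_add_X_pow]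
  have hcP := hcoef ![0, 0, 1, 0]
  have hcP' := hcoef ![-1, 0, 1, 0]
  have hcR := hcoef ![0, 0, 0, 1]
  have hcR' := hcoef ![-1, 0, 0, 1]
  have hcE := hcoef ![1, 0, 0, 0]
  have hcw := hcoef ![-1, 0, 1, 1]
  have hcu := hcoef ![0, 0, 1, -1]
  rw [hP] at hcP
  rw [hP'] at hcP'
  rw [hR] at hcR
  rw [hR'] at hcR'
  rw [hE] at hcE
  obtain ⟨-, w1, w2⟩ := hcw
  obtain ⟨-, u1, u2⟩ := hcu
  simp only [c1, d2, Fin.sum_univ_four] at hcP hcP' hcR hcR' hcE w1 w2 u1 u2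
  simp at hcP hcP' hcR hcR' hcE w1 w2 u1 u2
  have f1 := (realRooted_linePoly hQ ![-1, 0, 1, 1]).coeff_facts (hc0 _)
  have f2 := (realRooted_linePoly hQ ![0, 0, 1, -1]).coeff_facts (hc0 _)
  have hm' : (0 : ℝ) < m := by exact_mod_cast hm
  have ew1 : (linePoly Q ![-1, 0, 1, 1]).coeff 1 = 2 * m := by
    linarith
  have eu1 : (linePoly Q ![0, 0, 1, -1]).coeff 1 = 0 := by
    linarith
  -- The unknown `x₃ x₄`-coefficient of `Q` cancels in the sum of the quadratic forms at
  -- `w = e₃ + e₄ - e₁` and `u = e₃ - e₄`.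
  have esum : (linePoly Q ![-1, 0, 1, 1]).coeff 2 + (linePoly Q ![0, 0, 1, -1]).coeff 2
      = 2 * m ^ 2 - m := by
    linarith
  -- Cauchy–Schwarz: `w` has trace `2m` and rank at most `2m`.
  have hCS : 2 * (m : ℝ) ≤ (2 * m) ^ 2 - 2 * (linePoly Q ![-1, 0, 1, 1]).coeff 2 := by
    have h := f1.2.1
    have hnn := f1.1
    rw [ew1] at h hnn
    have hd : ((linePoly Q ![-1, 0, 1, 1]).natDegree : ℝ) ≤ 2 * m := by exact_mod_cast hdeg
    have := h.trans (mul_le_mul_of_nonneg_right hd hnn)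
    rw [pow_two] at this
    have := le_of_mul_le_mul_left this (by positivity)
    linarith
  have hu0 : (linePoly Q ![0, 0, 1, -1]).coeff 1 ^ 2
      - 2 * (linePoly Q ![0, 0, 1, -1]).coeff 2 = 0 := by
    refine le_antisymm ?_ f2.1
    rw [eu1]; nlinarith
  have hu : linePoly Q ![0, 0, 1, -1] = 1 := by
    ext k
    rcases k with _ | k
    · rw [hc0]; simp
    · have := f2.2.2 (k + 1)
      rw [hu0] at this
      simpa [coeff_one] using this
  have hfin := linePoly_add_of_eq_one hQ hu ![0, 1, 0, 1]
  have hv : (![0, 0, 1, -1] + ![0, 1, 0, 1] : Fin 4 → ℝ) = ![0, 1, 1, 0] := by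
    ext i; fin_cases i <;> simp
  rw [hv, hl₁ _ rfl, hl₂ _ rfl, linePoly_exQ₁, linePoly_exQ₂] at hfin
  have := congrArg (eval 1) hfin
  simp at this
  norm_num at this
  simp [hm.ne'] at this

end AmalgamationProof

/-- there are real zero polynomials `Q₁ ∈ ℝ[x₁,x₂,x₃]` and
`Q₂ ∈ ℝ[x₁,x₂,x₄]` with `Q₁|_{x₃=0} = Q₂|_{x₄=0}` such that for every `m ≥ 1` no real
zero polynomial `Q ∈ ℝ[x₁,x₂,x₃,x₄]` satisfies `Q|_{x₄=0} = Q₁^m` and `Q|_{x₃=0} = Q₂^m`.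
In particular, the real zero amalgamation conjecture is false. -/
theorem realzero_amalgamation_counterexample :
    (∃ Q₁ Q₂ : MvPolynomial (Fin 4) ℝ,
      IsRealZero Q₁ ∧ IsRealZero Q₂ ∧
      Q₁.vars ⊆ {0, 1, 2} ∧ Q₂.vars ⊆ {0, 1, 3} ∧
      setVarZero 2 Q₁ = setVarZero 3 Q₂ ∧
      ∀ m : ℕ, 0 < m →
        ¬ ∃ Q : MvPolynomial (Fin 4) ℝ, IsRealZero Q ∧
          setVarZero 3 Q = Q₁ ^ m ∧ setVarZero 2 Q = Q₂ ^ m) ∧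
    ¬ (∀ Q₁ Q₂ : MvPolynomial (Fin 4) ℝ,
      IsRealZero Q₁ → IsRealZero Q₂ →
      Q₁.vars ⊆ {0, 1, 2} → Q₂.vars ⊆ {0, 1, 3} →
      setVarZero 2 Q₁ = setVarZero 3 Q₂ →
      ∃ Q : MvPolynomial (Fin 4) ℝ, IsRealZero Q ∧
        setVarZero 3 Q = Q₁ ∧ setVarZero 2 Q = Q₂) := by
  have hmain : ∀ m : ℕ, 0 < m → ¬ ∃ Q : MvPolynomial (Fin 4) ℝ, IsRealZero Q ∧
      setVarZero 3 Q = exQ₁ ^ m ∧ setVarZero 2 Q = exQ₂ ^ m :=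
    fun m hm ⟨Q, hQ, h₁, h₂⟩ => no_amalgam m hm Q hQ h₁ h₂
  refine ⟨⟨exQ₁, exQ₂, isRealZero_exQ₁, isRealZero_exQ₂, vars_exQ₁, vars_exQ₂,
    setVarZero_exQ₁_eq, hmain⟩, fun h => ?_⟩
  obtain ⟨Q, hQ, h₁, h₂⟩ := h exQ₁ exQ₂ isRealZero_exQ₁ isRealZero_exQ₂ vars_exQ₁ vars_exQ₂
    setVarZero_exQ₁_eq
  exact hmain 1 one_pos ⟨Q, hQ, by rw [h₁, pow_one], by rw [h₂, pow_one]⟩
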